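/- arXiv:0709.3986 — 2 statements merged into one kernel-verified Lean document; each statement's English description precedes it below -/
import Mathlib

section
/- Let φ : ℝ → ℝ and x, u : ℝ → ℝ be infinitely differentiable. Then for every compact set K ⊆ ℝ, every k ∈ ℕ and every ε > 0 there exists δ > 0 such that for every real t with 0 < |t| < δ, every l ≤ k and every s ∈ K one has |iteratedDeriv l (fun s => (φ (x s + t·u s) − φ (x s))/t − deriv φ (x s) · u s) s| < ε. -/
/-!
With `Ψ (τ, y, w) = φ (y + τ • w)`, the error of the difference quotient at `s` is
`(Ψ (q + t • v) - Ψ q) / t - ∂ᵥΨ q` for the *fixed* direction `v = (1, 0, 0)`, evaluated at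
`q = (0, x s, u s)`. Iterated derivatives in `q` commute with translations and, by symmetry of
second derivatives, with `∂ᵥ`, so the `l`-th derivative of this expression is the same expression
for `iteratedFDeriv l Ψ`, which is `C¹`; strict differentiability makes it tend to `0` locally
uniformly in `q`. The Faà di Bruno bound transfers this to the composition with
`s ↦ (0, x s, u s)`, and compactness turns locally uniform into uniform convergence.
-/

open Filter Topology Asymptotics

section NontriviallyNormedField

variable {𝕜 : Type*} [NontriviallyNormedField 𝕜]
  {D : Type*} [NormedAddCommGroup D] [NormedSpace 𝕜 D]
  {E : Type*} [NormedAddCommGroup E] [NormedSpace 𝕜 E]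
  {F : Type*} [NormedAddCommGroup F] [NormedSpace 𝕜 F]
  {k : ℕ}

theorem norm_iteratedFDeriv_comp_le_sum {g : E → F} {h : D → E} {l : ℕ} (hg : ContDiff 𝕜 l g)
    (hh : ContDiff 𝕜 l h) (s : D) :
    ‖iteratedFDeriv 𝕜 l (g ∘ h) s‖ ≤
      l.factorial * (∑ j ∈ Finset.range (l + 1), ‖iteratedFDeriv 𝕜 j g (h s)‖) *
        (1 + ∑ j ∈ Finset.range (l + 1), ‖iteratedFDeriv 𝕜 j h s‖) ^ l := by
  refine norm_iteratedFDeriv_comp_le hg hh le_rfl s (fun j hj ↦ ?_) fun j hj₁ hj ↦ ?_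
  · exact Finset.single_le_sum (f := fun j ↦ ‖iteratedFDeriv 𝕜 j g (h s)‖)
      (fun _ _ ↦ norm_nonneg _) (Finset.mem_range_succ_iff.2 hj)
  · set S := ∑ j ∈ Finset.range (l + 1), ‖iteratedFDeriv 𝕜 j h s‖
    have one_le : 1 ≤ 1 + S := le_add_of_nonneg_right (by positivity)
    calc
      ‖iteratedFDeriv 𝕜 j h s‖ ≤ S :=
        Finset.single_le_sum (f := fun j ↦ ‖iteratedFDeriv 𝕜 j h s‖)
          (fun _ _ ↦ norm_nonneg _) (Finset.mem_range_succ_iff.2 hj)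
      _ ≤ 1 + S := le_add_of_nonneg_left zero_le_one
      _ ≤ (1 + S) ^ j := le_self_pow₀ one_le (Nat.one_le_iff_ne_zero.1 hj₁)

variable (𝕜) in
/-- Convergence `g i → 0` along `p` in the `C^k` topology, i.e. locally uniform convergence of all
derivatives of order at most `k`, with locally uniform convergence at `y` encoded as convergence
along the product filter `p ×ˢ 𝓝 y`. -/
def TendstoZeroCk {ι : Type*} (k : ℕ) (g : ι → E → F) (p : Filter ι) : Prop :=
  ∀ l ≤ k, ∀ y, Tendsto (fun q : ι × E ↦ iteratedFDeriv 𝕜 l (g q.1) q.2) (p ×ˢ 𝓝 y) (𝓝 0)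

namespace TendstoZeroCk

variable {ι : Type*} {p : Filter ι}

theorem comp {g : ι → E → F} (hg : TendstoZeroCk 𝕜 k g p) (hg_smooth : ∀ i, ContDiff 𝕜 k (g i))
    {h : D → E} (hh : ContDiff 𝕜 k h) : TendstoZeroCk 𝕜 k (fun i ↦ g i ∘ h) p := by
  intro l hl s
  have hlk : (l : WithTop ℕ∞) ≤ k := mod_cast hl
  have hjk {j : ℕ} (hj : j ∈ Finset.range (l + 1)) : j ≤ k :=
    (Finset.mem_range_succ_iff.1 hj).trans hl
  have tendsto_h : Tendsto (Prod.map id h) (p ×ˢ 𝓝 s) (p ×ˢ 𝓝 (h s)) :=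
    tendsto_id.prodMap hh.continuous.continuousAt
  have outer_tendsto :=
    tendsto_finsetSum (Finset.range (l + 1)) fun j hj ↦
      ((hg j (hjk hj) (h s)).comp tendsto_h).norm
  have inner_continuous :
      Continuous fun y ↦ 1 + ∑ j ∈ Finset.range (l + 1), ‖iteratedFDeriv 𝕜 j h y‖ :=
    continuous_const.add <| continuous_finsetSum _ fun j hj ↦
      (hh.continuous_iteratedFDeriv (mod_cast hjk hj)).norm
  have inner_tendsto := (inner_continuous.tendsto s).comp (tendsto_snd (f := p))
  refine squeeze_zero_norm (fun q ↦
    norm_iteratedFDeriv_comp_le_sum ((hg_smooth q.1).of_le hlk) (hh.of_le hlk) q.2) ?_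
  simpa using (outer_tendsto.const_mul (l.factorial : ℝ)).mul (inner_tendsto.pow l)

theorem eventually_forall_norm_lt {g : ι → E → F} (hg : TendstoZeroCk 𝕜 k g p) {K : Set E}
    (hK : IsCompact K) {ε : ℝ} (hε : 0 < ε) :
    ∀ᶠ i in p, ∀ l ≤ k, ∀ y ∈ K, ‖iteratedFDeriv 𝕜 l (g i) y‖ < ε := by
  refine (eventually_all_finite (Set.finite_Iic k)).2 fun l hl ↦ ?_
  have near_K : ∀ᶠ q in p ×ˢ 𝓝ˢ K, ‖iteratedFDeriv 𝕜 l (g q.1) q.2‖ < ε :=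
    hK.mem_prod_nhdsSet_of_forall fun y _ ↦
      (tendsto_zero_iff_norm_tendsto_zero.1 (hg l hl y)).eventually_lt_const hε
  exact near_K.curry.mono fun _ h ↦ h.self_of_nhdsSet

end TendstoZeroCk

variable (𝕜) in
/-- The error made when the derivative of `f` at `y` in the direction `v` is replaced by the
difference quotient with increment `t`. At `t = 0` the quotient is the junk value `0`. -/
noncomputable def slopeError (f : E → F) (v : E) (t : 𝕜) (y : E) : F :=
  t⁻¹ • (f (y + t • v) - f y) - fderiv 𝕜 f y v

theorem contDiff_slopeError {f : E → F} (hf : ContDiff 𝕜 (k + 1) f) (v : E) (t : 𝕜) :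
    ContDiff 𝕜 k (slopeError 𝕜 f v t) := by
  have : ContDiff 𝕜 k f := hf.of_le le_self_add
  have : ContDiff 𝕜 k (fderiv 𝕜 f) := hf.fderiv_right le_rfl
  unfold slopeError
  fun_prop

theorem slopeError_comp_add_smul {φ : E → F} (hφ : Differentiable 𝕜 φ) (t : 𝕜) (y w : E) :
    slopeError 𝕜 (fun q : 𝕜 × E × E ↦ φ (q.2.1 + q.1 • q.2.2)) (1, 0) t (0, y, w) =
      t⁻¹ • (φ (y + t • w) - φ y) - fderiv 𝕜 φ y w := by
  have hΨ : DifferentiableAt 𝕜 (fun q : 𝕜 × E × E ↦ φ (q.2.1 + q.1 • q.2.2)) (0, y, w) := by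
    fun_prop
  have fderiv_eq : fderiv 𝕜 (fun q : 𝕜 × E × E ↦ φ (q.2.1 + q.1 • q.2.2)) (0, y, w) (1, 0) =
      fderiv 𝕜 φ y w := by
    rw [← hΨ.lineDeriv_eq_fderiv, ← (hφ y).lineDeriv_eq_fderiv]
    simp [lineDeriv]
  simp [slopeError, fderiv_eq]

end NontriviallyNormedField

section RCLike

variable {𝕜 : Type*} [RCLike 𝕜]
  {D : Type*} [NormedAddCommGroup D] [NormedSpace 𝕜 D]
  {E : Type*} [NormedAddCommGroup E] [NormedSpace 𝕜 E]
  {F : Type*} [NormedAddCommGroup F] [NormedSpace 𝕜 F]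
  {k : ℕ}

theorem fderiv_fderiv_apply_comm {f : E → F} {x : E} (hf : ContDiffAt 𝕜 2 f x) (v w : E) :
    fderiv 𝕜 (fun y ↦ fderiv 𝕜 f y v) x w = fderiv 𝕜 (fun y ↦ fderiv 𝕜 f y w) x v := by
  have hf' : DifferentiableAt 𝕜 (fderiv 𝕜 f) x :=
    (hf.fderiv_right (m := 1) le_rfl).differentiableAt one_ne_zero
  rw [fderiv_clm_apply hf' (by fun_prop), fderiv_clm_apply hf' (by fun_prop)]
  simpa using hf.isSymmSndFDerivAt (by simp) w v

theorem iteratedFDeriv_fderiv_apply {f : E → F} {l : ℕ} (hf : ContDiff 𝕜 (l + 1) f) (v x : E) :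
    iteratedFDeriv 𝕜 l (fun y ↦ fderiv 𝕜 f y v) x = fderiv 𝕜 (iteratedFDeriv 𝕜 l f) x v := by
  induction l generalizing x with
  | zero =>
    rw [iteratedFDeriv_zero_eq_comp, iteratedFDeriv_zero_eq_comp, LinearIsometryEquiv.comp_fderiv]
    rfl
  | succ l ih =>
    have hf_iter : ContDiff 𝕜 2 (iteratedFDeriv 𝕜 l f) := hf.iteratedFDeriv_right <| by
      push_cast
      rw [add_assoc, add_comm, one_add_one_eq_two]
    have hf_iter_diff : Differentiable 𝕜 (iteratedFDeriv 𝕜 l f) :=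
      hf_iter.differentiable two_ne_zero
    have hf_succ : Differentiable 𝕜 (iteratedFDeriv 𝕜 (l + 1) f) :=
      hf.differentiable_iteratedFDeriv (by norm_cast; omega)
    have hdf_iter : Differentiable 𝕜 (iteratedFDeriv 𝕜 l (fun y ↦ fderiv 𝕜 f y v)) :=
      ((hf.fderiv_right (m := l + 1) le_rfl).clm_apply contDiff_const).differentiable_iteratedFDeriv
        (by norm_cast; omega)
    ext m
    set h : E → F := fun y ↦ iteratedFDeriv 𝕜 l f y (Fin.tail m)
    have hh : ContDiff 𝕜 2 h :=
      (ContinuousMultilinearMap.apply 𝕜 (fun _ ↦ E) F (Fin.tail m)).contDiff.comp hf_iter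
    calc
      iteratedFDeriv 𝕜 (l + 1) (fun y ↦ fderiv 𝕜 f y v) x m
      _ = fderiv 𝕜 (fun y ↦ iteratedFDeriv 𝕜 l (fun y ↦ fderiv 𝕜 f y v) y (Fin.tail m)) x (m 0) :=
        (hdf_iter x).iteratedFDeriv_succ_apply_left'
      _ = fderiv 𝕜 (fun y ↦ fderiv 𝕜 h y v) x (m 0) := by
        simp only [ih (hf.of_le (by norm_cast; omega)), h,
          fderiv_continuousMultilinear_apply_const_apply (hf_iter_diff _)]
      _ = fderiv 𝕜 (fun y ↦ fderiv 𝕜 h y (m 0)) x v :=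
        fderiv_fderiv_apply_comm hh.contDiffAt v (m 0)
      _ = fderiv 𝕜 (fun y ↦ iteratedFDeriv 𝕜 (l + 1) f y m) x v := by
        simp only [(hf_iter_diff _).iteratedFDeriv_succ_apply_left', h]
      _ = fderiv 𝕜 (iteratedFDeriv 𝕜 (l + 1) f) x v m :=
        fderiv_continuousMultilinear_apply_const_apply (hf_succ x) m v

theorem iteratedFDeriv_slopeError {f : E → F} {l : ℕ} (hf : ContDiff 𝕜 (l + 1) f) (v : E) (t : 𝕜) :
    iteratedFDeriv 𝕜 l (slopeError 𝕜 f v t) = slopeError 𝕜 (iteratedFDeriv 𝕜 l f) v t := by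
  have : ContDiff 𝕜 l f := hf.of_le le_self_add
  have : ContDiff 𝕜 l (fderiv 𝕜 f) := hf.fderiv_right le_rfl
  have : ContDiff 𝕜 l (fun y ↦ f (y + t • v)) := by fun_prop
  ext1 y
  unfold slopeError
  rw [fun_iteratedFDeriv_sub_apply (by fun_prop) (by fun_prop),
    iteratedFDeriv_const_smul_apply' (by fun_prop),
    fun_iteratedFDeriv_sub_apply (by fun_prop) (by fun_prop), iteratedFDeriv_comp_add_right,
    iteratedFDeriv_fderiv_apply hf]

theorem tendsto_slopeError {f : E → F} (hf : ContDiff 𝕜 1 f) (v y : E) :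
    Tendsto (fun q : 𝕜 × E ↦ slopeError 𝕜 f v q.1 q.2) (𝓝[≠] 0 ×ˢ 𝓝 y) (𝓝 0) := by
  have hle : 𝓝[≠] (0 : 𝕜) ×ˢ 𝓝 y ≤ 𝓝 (0, y) := by
    rw [nhds_prod_eq]
    exact prod_mono_left _ nhdsWithin_le_nhds
  have tendsto_pair : Tendsto (fun q : 𝕜 × E ↦ (q.2 + q.1 • v, q.2)) (𝓝[≠] 0 ×ˢ 𝓝 y)
      (𝓝 (y, y)) := by
    have hc : Continuous fun q : 𝕜 × E ↦ (q.2 + q.1 • v, q.2) := by fun_prop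
    simpa using (hc.tendsto (0, y)).mono_left hle
  have remainder : (fun q : 𝕜 × E ↦ f (q.2 + q.1 • v) - f q.2 - q.1 • fderiv 𝕜 f y v)
      =o[𝓝[≠] 0 ×ˢ 𝓝 y] Prod.fst := by
    have h := (hf.hasStrictFDerivAt one_ne_zero (x := y)).isLittleO.comp_tendsto tendsto_pair
    simp only [Function.comp_def, add_sub_cancel_left, map_smul] at h
    exact h.trans_isBigO <| .of_bound ‖v‖ <| .of_forall fun q ↦ by rw [norm_smul, mul_comm]
  have tendsto_fderiv : Tendsto (fun q : 𝕜 × E ↦ fderiv 𝕜 f y v - fderiv 𝕜 f q.2 v)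
      (𝓝[≠] 0 ×ˢ 𝓝 y) (𝓝 0) := by
    have hc : Continuous fun q : 𝕜 × E ↦ fderiv 𝕜 f y v - fderiv 𝕜 f q.2 v := by
      have := hf.continuous_fderiv one_ne_zero
      fun_prop
    simpa using (hc.tendsto (0, y)).mono_left hle
  have tendsto_sum := remainder.tendsto_inv_smul_nhds_zero.add tendsto_fderiv
  rw [add_zero] at tendsto_sum
  refine tendsto_sum.congr' ?_
  filter_upwards [tendsto_fst.eventually self_mem_nhdsWithin] with q (hq : q.1 ≠ 0)
  rw [slopeError, smul_sub, inv_smul_smul₀ hq, sub_add_sub_cancel]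

theorem tendstoZeroCk_slopeError {f : E → F} (hf : ContDiff 𝕜 (k + 1) f) (v : E) :
    TendstoZeroCk 𝕜 k (slopeError 𝕜 f v) (𝓝[≠] 0) := by
  intro l hl y
  have hle : (l + 1 : WithTop ℕ∞) ≤ k + 1 := by gcongr
  simp only [iteratedFDeriv_slopeError (hf.of_le hle)]
  exact tendsto_slopeError (hf.iteratedFDeriv_right (by rwa [add_comm])) v y

theorem tendstoZeroCk_slope_comp {φ : E → F} (hφ : ContDiff 𝕜 (k + 1) φ) {x u : D → E}
    (hx : ContDiff 𝕜 k x) (hu : ContDiff 𝕜 k u) :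
    TendstoZeroCk 𝕜 k (fun t s ↦ t⁻¹ • (φ (x s + t • u s) - φ (x s)) - fderiv 𝕜 φ (x s) (u s))
      (𝓝[≠] (0 : 𝕜)) := by
  have hΨ : ContDiff 𝕜 (k + 1) fun q : 𝕜 × E × E ↦ φ (q.2.1 + q.1 • q.2.2) := by fun_prop
  have hh : ContDiff 𝕜 k fun s ↦ ((0 : 𝕜), x s, u s) := by fun_prop
  simpa only [Function.comp_def, slopeError_comp_add_smul (hφ.differentiable (by simp))] using
    (tendstoZeroCk_slopeError hΨ (1, 0)).comp (contDiff_slopeError hΨ (1, 0)) hh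

theorem stmt4_general {φ : E → F} (hφ : ContDiff 𝕜 (k + 1) φ) {x u : D → E}
    (hx : ContDiff 𝕜 k x) (hu : ContDiff 𝕜 k u) {K : Set D} (hK : IsCompact K) {ε : ℝ}
    (hε : 0 < ε) :
    ∃ δ : ℝ, 0 < δ ∧ ∀ t : 𝕜, 0 < ‖t‖ → ‖t‖ < δ → ∀ l ≤ k, ∀ s ∈ K,
      ‖iteratedFDeriv 𝕜 l
        (fun s ↦ t⁻¹ • (φ (x s + t • u s) - φ (x s)) - fderiv 𝕜 φ (x s) (u s)) s‖ < ε := by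
  have h := (tendstoZeroCk_slope_comp hφ hx hu).eventually_forall_norm_lt hK hε
  obtain ⟨δ, hδ, hball⟩ := Metric.eventually_nhds_iff_ball.1 (eventually_nhdsWithin_iff.1 h)
  exact ⟨δ, hδ, fun t ht₀ ht ↦ hball t (mem_ball_zero_iff.2 ht) (norm_pos_iff.1 ht₀)⟩

end RCLike

/-- Non-periodic version of Lemma 8: for smooth `φ, x, u` the difference quotients of
`x ↦ φ ∘ x` converge to `(φ' ∘ x) · u` uniformly on every compact set, together with
all derivatives up to any fixed order `k`. -/
theorem stmt4 (φ : ℝ → ℝ) (hφ : ContDiff ℝ (⊤ : ℕ∞) φ)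
    (x u : ℝ → ℝ) (hx : ContDiff ℝ (⊤ : ℕ∞) x) (hu : ContDiff ℝ (⊤ : ℕ∞) u) :
    ∀ K : Set ℝ, IsCompact K → ∀ k : ℕ, ∀ ε : ℝ, 0 < ε → ∃ δ : ℝ, 0 < δ ∧
      ∀ t : ℝ, 0 < |t| → |t| < δ → ∀ l : ℕ, l ≤ k → ∀ s ∈ K,
        |iteratedDeriv l
          (fun s => (φ (x s + t * u s) - φ (x s)) / t - deriv φ (x s) * u s) s| < ε := by
  intro K hK k ε hε
  simpa only [norm_iteratedFDeriv_eq_norm_iteratedDeriv, fderiv_eq_smul_deriv, smul_eq_mul,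
    Real.norm_eq_abs, inv_mul_eq_div, mul_comm (u _)] using
    stmt4_general (contDiff_infty.1 hφ (k + 1)) (contDiff_infty.1 hx k) (contDiff_infty.1 hu k)
      hK hε
end

section
/- Let b₀ : ℝ → ℝ be defined by b₀ s = 1 for |s| ≤ 1, b₀ s = (1 + Real.exp(((2 − |s|)^2 − 1)⁻¹ · (2 − |s|)))⁻¹ for 1 < |s| < 3, and b₀ s = 0 for |s| ≥ 3. Let N ≥ 1 and let α : Fin N → ℕ be a multi-index. Then there exists M ≥ 0 such that for every δ with 0 < δ ≤ 1, every multi-index κ : Fin N → ℕ with κ i ≤ α i for all i, and every η : Fin N → ℝ, the function f η = (∏_{i} b₀(δ⁻¹ · η i)) · (∏_{i} (η i)^(α i)) satisfies |∂^κ f (η)| ≤ δ^(|α| − |κ|) · M, where |α| = ∑_i α i and |κ| = ∑_i κ i. -/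
/-- The partial derivative of `f : ℝ^N → ℝ` in the `i`-th coordinate. -/
noncomputable def partialDerivCoord {N : ℕ} (i : Fin N) (f : (Fin N → ℝ) → ℝ) :
    (Fin N → ℝ) → ℝ :=
  fun η => deriv (fun t : ℝ => f (Function.update η i t)) (η i)

/-- The iterated partial derivative `∂^κ f` of `f : ℝ^N → ℝ` associated to a
multi-index `κ : Fin N → ℕ`: one differentiates `κ i` times in the `i`-th
coordinate, for `i = N-1, …, 0` (the order is immaterial for smooth `f`). -/
noncomputable def multiPartialDeriv {N : ℕ} (κ : Fin N → ℕ) (f : (Fin N → ℝ) → ℝ) :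
    (Fin N → ℝ) → ℝ :=
  (List.finRange N).foldr (fun i g => (partialDerivCoord i)^[κ i] g) f

/-!
The function factors as `∏ i, b₀ (δ⁻¹ η i) * (η i) ^ (α i)`, so `∂^κ` acts on it one factor at a
time. Writing `φ s = b₀ s * s ^ a`, each factor is a dilation `t ↦ δ ^ a * φ (δ⁻¹ t)`, whose `k`-th
derivative is `δ ^ (a - k) * φ⁽ᵏ⁾ (δ⁻¹ t)`, and `φ⁽ᵏ⁾` is bounded because `φ` is smooth with compact
support. The smoothness of `b₀` comes from `2 (2 - s) / ((2 - s)² - 1) = 1 / (3 - s) - 1 / (s - 1)`: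
the exponential formula is a quotient built from the flat function `exp (-1 / x)`.
-/

section PartialDerivatives

variable {N : ℕ}

theorem partialDerivCoord_prod (j : Fin N) (g : Fin N → ℝ → ℝ) :
    partialDerivCoord j (fun η => ∏ i, g i (η i)) =
      fun η => ∏ i, Function.update g j (deriv (g j)) i (η i) := by
  funext η
  have hne (i : {i // i ≠ j}) : (i : Fin N) ≠ j := i.2
  simp [partialDerivCoord, Fintype.prod_eq_mul_prod_subtype_ne _ j, hne]

theorem iterate_partialDerivCoord_prod (j : Fin N) (n : ℕ) (g : Fin N → ℝ → ℝ) :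
    (partialDerivCoord j)^[n] (fun η => ∏ i, g i (η i)) =
      fun η => ∏ i, Function.update g j (iteratedDeriv n (g j)) i (η i) := by
  induction n with
  | zero => simp
  | succ n ih =>
    rw [Function.iterate_succ_apply', ih, partialDerivCoord_prod, Function.update_self,
      Function.update_idem, ← iteratedDeriv_succ]

theorem foldr_partialDerivCoord_prod (κ : Fin N → ℕ) (g : Fin N → ℝ → ℝ) {l : List (Fin N)}
    (hl : l.Nodup) :
    l.foldr (fun i f => (partialDerivCoord i)^[κ i] f) (fun η => ∏ i, g i (η i)) =
      fun η => ∏ i, (if i ∈ l then iteratedDeriv (κ i) (g i) else g i) (η i) := by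
  induction l with
  | nil => simp
  | cons j l ih =>
    obtain ⟨hj, hl⟩ := List.nodup_cons.1 hl
    rw [List.foldr_cons, ih hl,
      iterate_partialDerivCoord_prod j (κ j)
        fun i => if i ∈ l then iteratedDeriv (κ i) (g i) else g i]
    funext η
    refine Finset.prod_congr rfl fun i _ => ?_
    rcases eq_or_ne i j with rfl | hij
    · simp [hj]
    · simp [hij]

theorem multiPartialDeriv_prod (κ : Fin N → ℕ) (g : Fin N → ℝ → ℝ) :
    multiPartialDeriv κ (fun η => ∏ i, g i (η i)) =
      fun η => ∏ i, iteratedDeriv (κ i) (g i) (η i) := by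
  simp [multiPartialDeriv, foldr_partialDerivCoord_prod κ g (List.nodup_finRange N)]

end PartialDerivatives

section OneVariable

variable {𝕜 F : Type*} [NontriviallyNormedField 𝕜] [NormedAddCommGroup F] [NormedSpace 𝕜 F]

theorem hasCompactSupport_iteratedDeriv {f : 𝕜 → F} (hf : HasCompactSupport f) (k : ℕ) :
    HasCompactSupport (iteratedDeriv k f) := by
  induction k with
  | zero => simpa using hf
  | succ k ih => simpa only [iteratedDeriv_succ] using ih.deriv

theorem exists_forall_norm_iteratedDeriv_le {f : 𝕜 → F} {n : ℕ} (hf : ContDiff 𝕜 n f)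
    (hsupp : HasCompactSupport f) :
    ∃ C, 0 ≤ C ∧ ∀ k ≤ n, ∀ x, ‖iteratedDeriv k f x‖ ≤ C := by
  have hbound : ∀ k ≤ n, ∀ᶠ C in Filter.atTop, ∀ x, ‖iteratedDeriv k f x‖ ≤ C := by
    intro k hk
    obtain ⟨C, hC⟩ := (hasCompactSupport_iteratedDeriv hsupp k).exists_bound_of_continuous
      (hf.continuous_iteratedDeriv k (by exact_mod_cast hk))
    filter_upwards [Filter.eventually_ge_atTop C] with D hD x using (hC x).trans hD
  exact ((Filter.eventually_ge_atTop 0).and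
    ((Filter.eventually_all_finite (Set.finite_Iic n)).2 hbound)).exists

theorem iteratedDeriv_comp_inv_mul_mul_pow {f : 𝕜 → 𝕜} {a k : ℕ} (hf : ContDiff 𝕜 k f)
    (hka : k ≤ a) {c : 𝕜} (hc : c ≠ 0) (x : 𝕜) :
    iteratedDeriv k (fun t => f (c⁻¹ * t) * t ^ a) x =
      c ^ (a - k) * iteratedDeriv k (fun s => f s * s ^ a) (c⁻¹ * x) := by
  set φ : 𝕜 → 𝕜 := fun s => f s * s ^ a with hφ
  have hφk : ContDiff 𝕜 k φ := hf.mul (contDiff_id.pow a)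
  have hdilate : (fun t => f (c⁻¹ * t) * t ^ a) = fun t => c ^ a * φ (c⁻¹ * t) := by
    funext t
    simp only [hφ, mul_pow, inv_pow]
    field_simp
  calc iteratedDeriv k (fun t => f (c⁻¹ * t) * t ^ a) x
      = c ^ a * (c⁻¹ ^ k * iteratedDeriv k φ (c⁻¹ * x)) := by
        rw [hdilate, iteratedDeriv_const_mul_field, iteratedDeriv_comp_const_mul hφk]
    _ = c ^ (a - k) * iteratedDeriv k φ (c⁻¹ * x) := by
        rw [← mul_assoc, inv_pow, ← pow_sub₀ c hc hka]

end OneVariable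

theorem expNegInvGlue_add_pos {u v : ℝ} (h : 0 < u ∨ 0 < v) :
    0 < expNegInvGlue u + expNegInvGlue v := by
  rcases h with hu | hv
  · exact add_pos_of_pos_of_nonneg (expNegInvGlue.pos_of_pos hu) (expNegInvGlue.nonneg v)
  · exact add_pos_of_nonneg_of_pos (expNegInvGlue.nonneg u) (expNegInvGlue.pos_of_pos hv)

/-- The weight `e^(-1/u) / (e^(-1/u) + e^(-1/v))`, with `e^(-1/x)` read as `0` for `x ≤ 0`. It
passes smoothly from `0` where `u ≤ 0` to `1` where `v ≤ 0`; where both hold it is `0 / 0 = 0`. -/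
noncomputable def expNegInvWeight (u v : ℝ) : ℝ :=
  expNegInvGlue u / (expNegInvGlue u + expNegInvGlue v)

namespace expNegInvWeight

variable {u v : ℝ}

theorem eq_zero_of_nonpos_left (hu : u ≤ 0) : expNegInvWeight u v = 0 := by
  simp [expNegInvWeight, hu]

theorem eq_one_of_nonpos_right (hu : 0 < u) (hv : v ≤ 0) : expNegInvWeight u v = 1 := by
  simp [expNegInvWeight, expNegInvGlue.zero_of_nonpos hv, (expNegInvGlue.pos_of_pos hu).ne']

theorem eq_inv_one_add_exp (hu : 0 < u) (hv : 0 < v) :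
    expNegInvWeight u v = (1 + Real.exp (u⁻¹ - v⁻¹))⁻¹ := by
  have hexp : Real.exp (-v⁻¹) = Real.exp (-u⁻¹) * Real.exp (u⁻¹ - v⁻¹) := by
    rw [← Real.exp_add]
    ring_nf
  rw [expNegInvWeight, expNegInvGlue, expNegInvGlue, if_neg hu.not_ge, if_neg hv.not_ge, hexp]
  field_simp

theorem contDiff_comp {E : Type*} [NormedAddCommGroup E] [NormedSpace ℝ E] {n : ℕ∞}
    {p q : E → ℝ} (hp : ContDiff ℝ n p) (hq : ContDiff ℝ n q) (hpq : ∀ x, 0 < p x ∨ 0 < q x) :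
    ContDiff ℝ n fun x => expNegInvWeight (p x) (q x) :=
  (expNegInvGlue.contDiff.comp hp).div
    ((expNegInvGlue.contDiff.comp hp).add (expNegInvGlue.contDiff.comp hq))
    fun x => (expNegInvGlue_add_pos (hpq x)).ne'

end expNegInvWeight

/-- The cutoff function `b₀`, equal to `1` on `[-1, 1]` and to `0` off `(-3, 3)`, written as a
single quotient in `|s|` in place of the three-case formula. -/
noncomputable def plateauCutoff (s : ℝ) : ℝ :=
  expNegInvWeight (2 * (3 - |s|)) (2 * (|s| - 1))

theorem eq_plateauCutoff {b₀ : ℝ → ℝ} (h1 : ∀ s : ℝ, |s| ≤ 1 → b₀ s = 1)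
    (h2 : ∀ s : ℝ, 1 < |s| → |s| < 3 →
      b₀ s = (1 + Real.exp (((2 - |s|) ^ 2 - 1)⁻¹ * (2 - |s|)))⁻¹)
    (h3 : ∀ s : ℝ, 3 ≤ |s| → b₀ s = 0) :
    b₀ = plateauCutoff := by
  funext s
  rcases le_or_gt |s| 1 with hs1 | hs1
  · rw [h1 s hs1, plateauCutoff,
      expNegInvWeight.eq_one_of_nonpos_right (by linarith) (by linarith)]
  rcases le_or_gt 3 |s| with hs3 | hs3
  · rw [h3 s hs3, plateauCutoff, expNegInvWeight.eq_zero_of_nonpos_left (by linarith)]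
  have hexponent : ((2 - |s|) ^ 2 - 1)⁻¹ * (2 - |s|) = (2 * (3 - |s|))⁻¹ - (2 * (|s| - 1))⁻¹ := by
    have hl : |s| - 1 ≠ 0 := by linarith
    have hr : 3 - |s| ≠ 0 := by linarith
    rw [show (2 - |s|) ^ 2 - 1 = -((|s| - 1) * (3 - |s|)) by ring]
    field_simp
    ring
  rw [h2 s hs1 hs3, hexponent, plateauCutoff,
    expNegInvWeight.eq_inv_one_add_exp (by linarith) (by linarith)]

namespace plateauCutoff

-- Unlike `|s|`, both factors are smooth at `0`.
theorem eq_mul (s : ℝ) :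
    plateauCutoff s =
      expNegInvWeight (2 * (3 - s)) (2 * (s - 1)) *
        expNegInvWeight (2 * (3 - -s)) (2 * (-s - 1)) := by
  rcases le_total 0 s with hs | hs
  · rw [plateauCutoff, abs_of_nonneg hs,
      expNegInvWeight.eq_one_of_nonpos_right (u := 2 * (3 - -s)) (by linarith) (by linarith),
      mul_one]
  · rw [plateauCutoff, abs_of_nonpos hs,
      expNegInvWeight.eq_one_of_nonpos_right (u := 2 * (3 - s)) (by linarith) (by linarith),
      one_mul]

theorem contDiff {n : ℕ∞} : ContDiff ℝ n plateauCutoff := by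
  have hstep : ContDiff ℝ n fun s : ℝ => expNegInvWeight (2 * (3 - s)) (2 * (s - 1)) := by
    refine expNegInvWeight.contDiff_comp (by fun_prop) (by fun_prop) fun s => ?_
    rcases lt_or_ge s 3 with hs | hs
    · exact .inl (by linarith)
    · exact .inr (by linarith)
  rw [funext eq_mul]
  exact hstep.mul (hstep.comp contDiff_neg)

theorem hasCompactSupport : HasCompactSupport plateauCutoff := by
  refine HasCompactSupport.intro (isCompact_Icc (a := (-3 : ℝ)) (b := 3)) fun s hs => ?_
  have hs3 : 3 < |s| := not_le.1 (mt abs_le.1 hs)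
  exact expNegInvWeight.eq_zero_of_nonpos_left (by linarith)

end plateauCutoff

theorem stmt9_general {N : ℕ} (α : Fin N → ℕ) {b : Fin N → ℝ → ℝ}
    (hb : ∀ i, ContDiff ℝ (α i) (b i)) (hsupp : ∀ i, HasCompactSupport (b i)) :
    ∃ M : ℝ, 0 ≤ M ∧
      ∀ δ : ℝ, 0 < δ →
        ∀ κ : Fin N → ℕ, (∀ i, κ i ≤ α i) →
          ∀ η : Fin N → ℝ,
            |multiPartialDeriv κ
                (fun η : Fin N → ℝ => (∏ i, b i (δ⁻¹ * η i)) * ∏ i, (η i) ^ (α i)) η| ≤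
              δ ^ ((∑ i, α i) - (∑ i, κ i)) * M := by
  choose C hC0 hC using fun i => exists_forall_norm_iteratedDeriv_le
    ((hb i).mul (contDiff_id.pow (α i))) (hsupp i).mul_right
  refine ⟨∏ i, C i, Finset.prod_nonneg fun i _ => hC0 i, fun δ hδ κ hκ η => ?_⟩
  simp only [← Finset.prod_mul_distrib]
  calc |multiPartialDeriv κ (fun η => ∏ i, b i (δ⁻¹ * η i) * η i ^ α i) η|
      = ∏ i, |iteratedDeriv (κ i) (fun t => b i (δ⁻¹ * t) * t ^ α i) (η i)| := by
        rw [multiPartialDeriv_prod κ fun i t => b i (δ⁻¹ * t) * t ^ α i, Finset.abs_prod]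
    _ = ∏ i, δ ^ (α i - κ i) *
          |iteratedDeriv (κ i) (fun s => b i s * s ^ α i) (δ⁻¹ * η i)| := by
        refine Finset.prod_congr rfl fun i _ => ?_
        rw [iteratedDeriv_comp_inv_mul_mul_pow ((hb i).of_le (by exact_mod_cast hκ i)) (hκ i)
          hδ.ne', abs_mul, abs_of_pos (pow_pos hδ _)]
    _ ≤ ∏ i, δ ^ (α i - κ i) * C i := by
        gcongr with i
        exact hC i (κ i) (hκ i) _
    _ = δ ^ ((∑ i, α i) - ∑ i, κ i) * ∏ i, C i := by
        rw [Finset.prod_mul_distrib, Finset.prod_pow_eq_pow_sum,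
          Finset.sum_tsub_distrib _ fun i _ => hκ i]

/-- Second claim of Remarks 5(a): there is `M ≥ 0`, independent of the scaling
parameter `δ ∈ (0,1]`, such that for every multi-index `κ ≤ α` and every `η`,
`|∂^κ ((∏ i, b₀(δ⁻¹ η i)) · ∏ i, (η i)^(α i))(η)| ≤ δ^(|α|−|κ|) · M`. -/
theorem stmt9 (b₀ : ℝ → ℝ)
    (h1 : ∀ s : ℝ, |s| ≤ 1 → b₀ s = 1)
    (h2 : ∀ s : ℝ, 1 < |s| → |s| < 3 →
      b₀ s = (1 + Real.exp (((2 - |s|) ^ 2 - 1)⁻¹ * (2 - |s|)))⁻¹)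
    (h3 : ∀ s : ℝ, 3 ≤ |s| → b₀ s = 0)
    (N : ℕ) (hN : 1 ≤ N) (α : Fin N → ℕ) :
    ∃ M : ℝ, 0 ≤ M ∧
      ∀ δ : ℝ, 0 < δ → δ ≤ 1 →
        ∀ κ : Fin N → ℕ, (∀ i : Fin N, κ i ≤ α i) →
          ∀ η : Fin N → ℝ,
            |multiPartialDeriv κ
                (fun η : Fin N → ℝ => (∏ i, b₀ (δ⁻¹ * η i)) * ∏ i, (η i) ^ (α i)) η| ≤
              δ ^ ((∑ i, α i) - (∑ i, κ i)) * M := by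
  obtain rfl := eq_plateauCutoff h1 h2 h3
  obtain ⟨M, hM0, hM⟩ := stmt9_general α (fun i => plateauCutoff.contDiff (n := α i))
    fun _ => plateauCutoff.hasCompactSupport
  exact ⟨M, hM0, fun δ hδ _ => hM δ hδ⟩
end
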